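/- arXiv:1411.7763 — 2 statements merged into one kernel-verified Lean document; each statement's English description precedes it below -/
import Mathlib

section
/- For all integers b ≥ 1 and c ≥ 0, the polynomial Q_{b,c} satisfies the recursion Q_{b,c}(x,y,z,w) = w·y·(z−1)·q^{4b+8c−4}·Q_{b−1,c}(x,y,q^{−4}z,w) + w·x·(y−1)·y·z·q^{4b+4c−4}·Q_{b−1,c}(x,q^{−2}y,z,w) + (w−1)·(y−1)·q^{6b+8c−6}·Q_{b−1,c}(x,q^{−2}y,z,q^{−2}w) + w·(x−1)·y·(z−1)·q^{4b+8c−4}·Q_{b−1,c}(q^{−4}x,q^{2}y,q^{−4}z,w) + (w−1)·(x−1)·y·q^{6b+8c−6}·Q_{b−1,c}(q^{−4}x,y,z,q^{−2}w). (For c = 0 this is the defining recursion; for c ≥ 1 it is a nontrivial compatibility with the defining recursion in c.) -/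
noncomputable section

open MvPolynomial

/-- The field `K = ℚ(q)` of rational functions in `q` over `ℚ`. -/
abbrev K : Type := RatFunc ℚ

/-- The variable `q ∈ K = ℚ(q)`. -/
def q : K := RatFunc.X

/-- The polynomial ring `K[x,y,z,w]`. -/
abbrev P4 : Type := MvPolynomial (Fin 4) K

def xP : P4 := X 0
def yP : P4 := X 1
def zP : P4 := X 2
def wP : P4 := X 3

/-- The `K`-algebra map `K[x,y,z,w] → K[x,y,z,w]` rescaling the variables:
`x ↦ q^a·x`, `y ↦ q^b·y`, `z ↦ q^c·z`, `w ↦ q^d·w`. -/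
def scl (a b c d : ℤ) : P4 →ₐ[K] P4 :=
  aeval ![C (q ^ a) * X 0, C (q ^ b) * X 1, C (q ^ c) * X 2, C (q ^ d) * X 3]

/-- The polynomials `Q_{b,0}(x,y,z,w)`, defined by the recursion (rec1) of the paper. -/
def Qb0 : ℕ → P4
  | 0 => 1
  | b + 1 =>
      C (q ^ (4 * (b : ℤ))) * wP * yP * (zP - 1) * scl 0 0 (-4) 0 (Qb0 b)
    + C (q ^ (4 * (b : ℤ))) * wP * xP * (yP - 1) * yP * zP * scl 0 (-2) 0 0 (Qb0 b)
    + C (q ^ (6 * (b : ℤ))) * (wP - 1) * (yP - 1) * scl 0 (-2) 0 (-2) (Qb0 b)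
    + C (q ^ (4 * (b : ℤ))) * wP * (xP - 1) * yP * (zP - 1) * scl (-4) 2 (-4) 0 (Qb0 b)
    + C (q ^ (6 * (b : ℤ))) * (wP - 1) * (xP - 1) * yP * scl (-4) 0 0 (-2) (Qb0 b)

/-- The polynomials `Q_{b,c}(x,y,z,w)`: for `c ≥ 1` they are defined by the
recursion (rec2) of the paper, lowering `c`; for `c = 0` by `Qb0`. -/
def Q : ℕ → ℕ → P4
  | b, 0 => Qb0 b
  | b, c + 1 =>
      - (C (q ^ (4 * (b : ℤ) + 8 * (c : ℤ))) * wP ^ 2 * yP * (zP - 1) * zP)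
          * scl 0 0 (-4) 0 (Q b c)
    + (C (q ^ (4 * (b : ℤ) + 4 * (c : ℤ) - 2)) * wP * xP * (yP - 1) * zP)
          * (C (q ^ (2 * (b : ℤ) + 4 * (c : ℤ) + 4)) - C (q ^ (2 : ℤ)) * wP * yP * zP)
          * scl 0 (-2) 0 0 (Q b c)
    - (C (q ^ (6 * (b : ℤ) + 8 * (c : ℤ))) * (wP - 1) * wP * (yP - 1) * zP)
          * scl 0 (-2) 0 (-2) (Q b c)
    + (C (q ^ (4 * (b : ℤ) + 8 * (c : ℤ) - 2)) * wP * (xP - 1) * (zP - 1))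
          * (C (q ^ (2 * (b : ℤ) + 4 * (c : ℤ) + 4)) - C (q ^ (2 : ℤ)) * wP * yP * zP)
          * scl (-4) 2 (-4) 0 (Q b c)
    + (C (q ^ (6 * (b : ℤ) + 8 * (c : ℤ) - 2)) * (wP - 1) * (xP - 1))
          * (C (q ^ (2 * (b : ℤ) + 4 * (c : ℤ) + 4)) - C (q ^ (2 : ℤ)) * wP * yP * zP)
          * scl (-4) 0 0 (-2) (Q b c)


lemma scl_scl (a b c d a₂ b₂ c₂ d₂ : ℤ) (p : P4) :
    scl a b c d (scl a₂ b₂ c₂ d₂ p) = scl (a + a₂) (b + b₂) (c + c₂) (d + d₂) p := by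
  have hq : q ≠ 0 := RatFunc.X_ne_zero
  have : (scl a b c d).comp (scl a₂ b₂ c₂ d₂) = scl (a + a₂) (b + b₂) (c + c₂) (d + d₂) := by
    apply MvPolynomial.algHom_ext
    intro i
    fin_cases i <;>
      simp [scl, zpow_add₀ hq, MvPolynomial.algHom_C, MvPolynomial.algebraMap_eq] <;> ring
  rw [← this]; rfl

lemma scl_C (a b c d : ℤ) (r : K) : scl a b c d (C r) = C r := by
  simp [scl, MvPolynomial.algebraMap_eq]

lemma scl_x (a b c d : ℤ) : scl a b c d xP = C (q ^ a) * xP := by simp [scl, xP]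
lemma scl_y (a b c d : ℤ) : scl a b c d yP = C (q ^ b) * yP := by simp [scl, yP]
lemma scl_z (a b c d : ℤ) : scl a b c d zP = C (q ^ c) * zP := by simp [scl, zP]
lemma scl_w (a b c d : ℤ) : scl a b c d wP = C (q ^ d) * wP := by simp [scl, wP]

/-- The operator lowering `b`, at `(b + 1, c)`. -/
def opA (b c : ℕ) (p : P4) : P4 :=
      C (q ^ (4 * (b : ℤ) + 8 * (c : ℤ))) * wP * yP * (zP - 1) * scl 0 0 (-4) 0 p
    + C (q ^ (4 * (b : ℤ) + 4 * (c : ℤ))) * wP * xP * (yP - 1) * yP * zP * scl 0 (-2) 0 0 p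
    + C (q ^ (6 * (b : ℤ) + 8 * (c : ℤ))) * (wP - 1) * (yP - 1) * scl 0 (-2) 0 (-2) p
    + C (q ^ (4 * (b : ℤ) + 8 * (c : ℤ))) * wP * (xP - 1) * yP * (zP - 1) * scl (-4) 2 (-4) 0 p
    + C (q ^ (6 * (b : ℤ) + 8 * (c : ℤ))) * (wP - 1) * (xP - 1) * yP * scl (-4) 0 0 (-2) p

/-- The operator lowering `c`, at `(b, c + 1)`. -/
def opB (b c : ℕ) (p : P4) : P4 :=
      - (C (q ^ (4 * (b : ℤ) + 8 * (c : ℤ))) * wP ^ 2 * yP * (zP - 1) * zP)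
          * scl 0 0 (-4) 0 p
    + (C (q ^ (4 * (b : ℤ) + 4 * (c : ℤ) - 2)) * wP * xP * (yP - 1) * zP)
          * (C (q ^ (2 * (b : ℤ) + 4 * (c : ℤ) + 4)) - C (q ^ (2 : ℤ)) * wP * yP * zP)
          * scl 0 (-2) 0 0 p
    - (C (q ^ (6 * (b : ℤ) + 8 * (c : ℤ))) * (wP - 1) * wP * (yP - 1) * zP)
          * scl 0 (-2) 0 (-2) p
    + (C (q ^ (4 * (b : ℤ) + 8 * (c : ℤ) - 2)) * wP * (xP - 1) * (zP - 1))
          * (C (q ^ (2 * (b : ℤ) + 4 * (c : ℤ) + 4)) - C (q ^ (2 : ℤ)) * wP * yP * zP)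
          * scl (-4) 2 (-4) 0 p
    + (C (q ^ (6 * (b : ℤ) + 8 * (c : ℤ) - 2)) * (wP - 1) * (xP - 1))
          * (C (q ^ (2 * (b : ℤ) + 4 * (c : ℤ) + 4)) - C (q ^ (2 : ℤ)) * wP * yP * zP)
          * scl (-4) 0 0 (-2) p

set_option maxHeartbeats 4000000 in
/-- The two operators satisfy the compatibility identity. -/
lemma opA_opB (b c : ℕ) (p : P4) : opA b (c + 1) (opB b c p) = opB (b + 1) c (opA b c p) := by
  have hq : q ≠ 0 := RatFunc.X_ne_zero
  apply IsFractionRing.injective P4 (FractionRing P4)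
  unfold opA opB
  simp only [map_add, map_sub, map_mul, map_neg, map_pow, map_one, scl_C, scl_x, scl_y, scl_z,
    scl_w, scl_scl]
  norm_num only
  generalize hφ : algebraMap P4 (FractionRing P4) = φ
  have hC : ∀ n : ℤ, φ (C (q ^ n)) = (φ (C q)) ^ n := fun n => map_zpow₀ (φ.comp C) q n
  have ht : φ (C q) ≠ 0 := fun h => hq ((map_eq_zero (φ.comp C)).1 h)
  simp only [hC]
  generalize φ (C q) = t at *
  generalize φ xP = x
  generalize φ yP = y
  generalize φ zP = z
  generalize φ wP = w
  push_cast
  have hm : ∀ (k : ℕ) (n : ℤ), t ^ ((k : ℤ) * n) = (t ^ n) ^ k := fun k n => by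
    rw [mul_comm, zpow_mul, zpow_natCast]
  have h2 : ∀ n : ℤ, t ^ (2 * n) = (t ^ n) ^ 2 := fun n => by exact_mod_cast hm 2 n
  have h4 : ∀ n : ℤ, t ^ (4 * n) = (t ^ n) ^ 4 := fun n => by exact_mod_cast hm 4 n
  have h6 : ∀ n : ℤ, t ^ (6 * n) = (t ^ n) ^ 6 := fun n => by exact_mod_cast hm 6 n
  have h8 : ∀ n : ℤ, t ^ (8 * n) = (t ^ n) ^ 8 := fun n => by exact_mod_cast hm 8 n
  simp only [mul_add, mul_one, zpow_add₀ ht, zpow_sub₀ ht, h2, h4, h6, h8]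
  generalize t ^ (b : ℤ) = U
  generalize t ^ (c : ℤ) = V
  simp only [zpow_neg, zpow_ofNat, zpow_zero, one_mul]
  generalize φ (scl _ _ _ _ p) = p1
  generalize φ (scl _ _ _ _ p) = p2
  generalize φ (scl _ _ _ _ p) = p3
  generalize φ (scl _ _ _ _ p) = p4
  generalize φ (scl _ _ _ _ p) = p5
  generalize φ (scl _ _ _ _ p) = p6
  generalize φ (scl _ _ _ _ p) = p7
  generalize φ (scl _ _ _ _ p) = p8
  generalize φ (scl _ _ _ _ p) = p9
  generalize φ (scl _ _ _ _ p) = p10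
  generalize φ (scl _ _ _ _ p) = p11
  generalize φ (scl _ _ _ _ p) = p12
  generalize φ (scl _ _ _ _ p) = p13
  generalize φ (scl _ _ _ _ p) = p14
  clear hC h2 h4 h6 h8 hm hφ φ
  simp only [pow_zero, one_mul]
  field_simp
  ring

lemma Q_succ_c (b c : ℕ) : Q b (c + 1) = opB b c (Q b c) := by
  rw [Q]; rfl

lemma Q_succ_b (b c : ℕ) : Q (b + 1) c = opA b c (Q b c) := by
  induction c with
  | zero =>
    simp only [Q, Qb0, opA]
    simp
  | succ c ih => rw [Q_succ_c, Q_succ_c, ih, opA_opB]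

/-- for `b ≥ 1`, `c ≥ 0`, the recursion (rec1) lowering `b` holds
for `Q_{b,c}` (for `c = 0` it is the defining recursion, for `c ≥ 1` a
nontrivial compatibility). -/
theorem Q_rec_b (b c : ℕ) (hb : 1 ≤ b) :
    Q b c =
      C (q ^ (4 * (b : ℤ) + 8 * (c : ℤ) - 4)) * wP * yP * (zP - 1)
          * scl 0 0 (-4) 0 (Q (b - 1) c)
    + C (q ^ (4 * (b : ℤ) + 4 * (c : ℤ) - 4)) * wP * xP * (yP - 1) * yP * zP
          * scl 0 (-2) 0 0 (Q (b - 1) c)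
    + C (q ^ (6 * (b : ℤ) + 8 * (c : ℤ) - 6)) * (wP - 1) * (yP - 1)
          * scl 0 (-2) 0 (-2) (Q (b - 1) c)
    + C (q ^ (4 * (b : ℤ) + 8 * (c : ℤ) - 4)) * wP * (xP - 1) * yP * (zP - 1)
          * scl (-4) 2 (-4) 0 (Q (b - 1) c)
    + C (q ^ (6 * (b : ℤ) + 8 * (c : ℤ) - 6)) * (wP - 1) * (xP - 1) * yP
          * scl (-4) 0 0 (-2) (Q (b - 1) c) := by
  obtain ⟨b, rfl⟩ : ∃ b₂, b = b₂ + 1 := ⟨b - 1, by omega⟩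
  rw [Q_succ_b, opA, Nat.add_sub_cancel]
  have e1 : 4 * ((b + 1 : ℕ) : ℤ) + 8 * (c : ℤ) - 4 = 4 * (b : ℤ) + 8 * (c : ℤ) := by
    push_cast; ring
  have e2 : 4 * ((b + 1 : ℕ) : ℤ) + 4 * (c : ℤ) - 4 = 4 * (b : ℤ) + 4 * (c : ℤ) := by
    push_cast; ring
  have e3 : 6 * ((b + 1 : ℕ) : ℤ) + 8 * (c : ℤ) - 6 = 6 * (b : ℤ) + 8 * (c : ℤ) := by
    push_cast; ring
  rw [e1, e2, e3]
end
end

section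
/- For all (b,c) ∈ ℤ_{≥0}² and all (r,s,t,u) ∈ ℤ_{≥0}⁴: if the coefficient of the monomial x^r y^s z^t w^u in Q_{b,c} is nonzero, then u ≥ t, 2r ≥ s, b − s + 2t − u ≥ 0 and c − r + s − t ≥ 0. -/
noncomputable section

open MvPolynomial

/-- The region of exponents. -/
def Reg (b c r s t u : ℕ) : Prop :=
  t ≤ u ∧ s ≤ 2 * r ∧ s + u ≤ b + 2 * t ∧ r + t ≤ c + s

/-- The monomial with exponents `r, s, t, u`. -/
def mon (r s t u : ℕ) : P4 := xP ^ r * yP ^ s * zP ^ t * wP ^ u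

/-- The set of monomials with exponents in the region. -/
def monSet (b c : ℕ) : Set P4 := {p | ∃ r s t u, Reg b c r s t u ∧ p = mon r s t u}

/-- The polynomials supported in the region. -/
def Sup (b c : ℕ) : Submodule K P4 := Submodule.span K (monSet b c)

theorem term_mem (b c r s t u : ℕ) (k : K) (h : Reg b c r s t u ∨ k = 0) :
    C k * mon r s t u ∈ Sup b c := by
  rcases h with h | h
  · rw [← smul_eq_C_mul]
    exact Submodule.smul_mem _ _ (Submodule.subset_span ⟨r, s, t, u, h, rfl⟩)
  · simp [h]

theorem step_mem (A1 A2 A3 A4 A5 : P4) (f1 f2 f3 f4 f5 : P4 →ₐ[K] P4) (S : Set P4)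
    (T0 : Submodule K P4)
    (h : ∀ p ∈ S, A1 * f1 p + A2 * f2 p + A3 * f3 p + A4 * f4 p + A5 * f5 p ∈ T0)
    (p : P4) (hp : p ∈ Submodule.span K S) :
    A1 * f1 p + A2 * f2 p + A3 * f3 p + A4 * f4 p + A5 * f5 p ∈ T0 := by
  induction hp using Submodule.span_induction with
  | mem x hx => exact h x hx
  | zero => simp
  | add x y _ _ hx hy =>
    have := T0.add_mem hx hy
    simp only [map_add]
    convert this using 1
    ring
  | smul a x _ hx =>
    have := T0.smul_mem a hx
    simp only [map_smul, mul_smul_comm]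
    simpa only [smul_add] using this

theorem q_ne : q ≠ 0 := RatFunc.X_ne_zero

theorem scl_mon (a b c d : ℤ) (r s t u : ℕ) :
    scl a b c d (mon r s t u) = C (q ^ (a * r + b * s + c * t + d * u)) * mon r s t u := by
  have h : q ^ (a * r + b * s + c * t + d * u)
      = (q ^ a) ^ r * (q ^ b) ^ s * (q ^ c) ^ t * (q ^ d) ^ u := by
    simp only [zpow_add₀ q_ne, zpow_mul, zpow_natCast]
  rw [h]
  simp only [mon, scl, xP, yP, zP, wP, map_mul, map_pow, aeval_X]
  simp
  ring

theorem coeff_of_mem (b c : ℕ) (p : P4) (hp : p ∈ Sup b c) (m : Fin 4 →₀ ℕ)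
    (h : coeff m p ≠ 0) : Reg b c (m 0) (m 1) (m 2) (m 3) := by
  induction hp using Submodule.span_induction with
  | mem x hx =>
    obtain ⟨r, s, t, u, hR, rfl⟩ := hx
    have e : mon r s t u = monomial (Finsupp.single 0 r + Finsupp.single 1 s
        + Finsupp.single 2 t + Finsupp.single 3 u) 1 := by
      simp [mon, xP, yP, zP, wP, X_pow_eq_monomial, monomial_mul]
    rw [e, coeff_monomial] at h
    have h2 : Finsupp.single 0 r + Finsupp.single 1 s
        + Finsupp.single 2 t + Finsupp.single 3 u = m := by
      by_contra hne
      simp [hne] at h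
    subst h2
    simpa [Finsupp.single_apply] using hR
  | zero => simp at h
  | add x y _ _ hx hy =>
    by_cases h1 : coeff m x = 0
    · by_cases h2 : coeff m y = 0
      · simp [h1, h2] at h
      · exact hy h2
    · exact hx h1
  | smul a x _ hx =>
    apply hx
    intro h0
    simp [h0] at h

theorem b_coef {F : Type*} [Field F] (b c r s t u : ℕ) (hR : Reg b c r s t u)
    (a1 a2 a3 a4 a5 α β : F)
    (h1 : s = 2 * r → a1 = a4 ∧ a3 = a5) (h2 : s + u = b + 2 * t → a1 = a3 ∧ a4 = a5)
    (h3 : r + t = c + s → a2 = a4) :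
    (Reg (b + 1) c r (s + 1) (t + 1) (u + 1) ∨ a1 - a4 = 0) ∧
    (Reg (b + 1) c r (s + 1) t (u + 1) ∨ -a1 + a3 + a4 - a5 = 0) ∧
    (Reg (b + 1) c (r + 1) (s + 2) (t + 1) (u + 1) ∨ a2 = 0) ∧
    (Reg (b + 1) c (r + 1) (s + 1) (t + 1) (u + 1) ∨ -a2 + a4 = 0) ∧
    (Reg (b + 1) c r s t (u + 1) ∨ -a3 = 0) ∧
    (Reg (b + 1) c r (s + 1) t u ∨ -a3 + a5 = 0) ∧
    (Reg (b + 1) c r s t u ∨ a3 = 0) ∧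
    (Reg (b + 1) c (r + 1) (s + 1) t (u + 1) ∨ -a4 + a5 = 0) ∧
    (Reg (b + 1) c (r + 1) (s + 1) t u ∨ -a5 = 0) := by
  unfold Reg at *
  refine ⟨?_, ?_, ?_, ?_, ?_, ?_, ?_, ?_, ?_⟩ <;> grind

theorem c_coef {F : Type*} [Field F] (b c r s t u : ℕ) (hR : Reg b c r s t u)
    (a1 a2 a3 a4 a5 α β : F)
    (h1 : s = 2 * r → a1 = β * a4 ∧ a3 = β * a5)
    (h2 : s + u = b + 2 * t → a1 = a3 ∧ a4 = a5) (h3 : r + t = c + s → a2 = a4) :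
    (Reg b (c + 1) r (s + 1) (t + 2) (u + 2) ∨ -a1 + β * a4 = 0) ∧
    (Reg b (c + 1) r (s + 1) (t + 1) (u + 2) ∨ a1 - a3 - β * a4 + β * a5 = 0) ∧
    (Reg b (c + 1) (r + 1) (s + 1) (t + 1) (u + 1) ∨ α * a2 + β * a5 = 0) ∧
    (Reg b (c + 1) (r + 1) s (t + 1) (u + 1) ∨ α * (a4 - a2) = 0) ∧
    (Reg b (c + 1) (r + 1) (s + 2) (t + 2) (u + 2) ∨ -β * a2 = 0) ∧
    (Reg b (c + 1) (r + 1) (s + 1) (t + 2) (u + 2) ∨ β * (a2 - a4) = 0) ∧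
    (Reg b (c + 1) r s (t + 1) (u + 2) ∨ a3 = 0) ∧
    (Reg b (c + 1) r (s + 1) (t + 1) (u + 1) ∨ a3 - β * a5 = 0) ∧
    (Reg b (c + 1) r s (t + 1) (u + 1) ∨ -a3 - α * a4 = 0) ∧
    (Reg b (c + 1) (r + 1) s t (u + 1) ∨ α * (a5 - a4) = 0) ∧
    (Reg b (c + 1) r s t (u + 1) ∨ α * (a4 - a5) = 0) ∧
    (Reg b (c + 1) (r + 1) s t u ∨ -α * a5 = 0) ∧
    (Reg b (c + 1) r s t u ∨ α * a5 = 0) ∧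
    (Reg b (c + 1) (r + 1) (s + 1) (t + 1) (u + 2) ∨ β * (a4 - a5) = 0) := by
  unfold Reg at *
  refine ⟨?_, ?_, ?_, ?_, ?_, ?_, ?_, ?_, ?_, ?_, ?_, ?_, ?_, ?_⟩ <;> grind

theorem b_expand (r s t u : ℕ) (a1 a2 a3 a4 a5 α β : K) :
    (C a1 * wP * yP * (zP - 1) + C a2 * wP * xP * (yP - 1) * yP * zP
      + C a3 * (wP - 1) * (yP - 1) + C a4 * wP * (xP - 1) * yP * (zP - 1)
      + C a5 * (wP - 1) * (xP - 1) * yP) * mon r s t u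
      = C (a1 - a4) * mon (r + 0) (s + 1) (t + 1) (u + 1)
      + C (-a1 + a3 + a4 - a5) * mon (r + 0) (s + 1) (t + 0) (u + 1)
      + C (a2) * mon (r + 1) (s + 2) (t + 1) (u + 1)
      + C (-a2 + a4) * mon (r + 1) (s + 1) (t + 1) (u + 1)
      + C (-a3) * mon (r + 0) (s + 0) (t + 0) (u + 1)
      + C (-a3 + a5) * mon (r + 0) (s + 1) (t + 0) (u + 0)
      + C (a3) * mon (r + 0) (s + 0) (t + 0) (u + 0)
      + C (-a4 + a5) * mon (r + 1) (s + 1) (t + 0) (u + 1)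
      + C (-a5) * mon (r + 1) (s + 1) (t + 0) (u + 0) := by
  simp only [mon, map_sub, map_add, map_mul, map_neg]
  ring

theorem c_expand (r s t u : ℕ) (a1 a2 a3 a4 a5 α β : K) :
    (-(C a1 * wP ^ 2 * yP * (zP - 1) * zP)
      + C a2 * wP * xP * (yP - 1) * zP * (C α - C β * wP * yP * zP)
      + -(C a3 * (wP - 1) * wP * (yP - 1) * zP)
      + C a4 * wP * (xP - 1) * (zP - 1) * (C α - C β * wP * yP * zP)
      + C a5 * (wP - 1) * (xP - 1) * (C α - C β * wP * yP * zP)) * mon r s t u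
      = C (-a1 + β * a4) * mon (r + 0) (s + 1) (t + 2) (u + 2)
      + C (a1 - a3 - β * a4 + β * a5) * mon (r + 0) (s + 1) (t + 1) (u + 2)
      + C (α * a2 + β * a5) * mon (r + 1) (s + 1) (t + 1) (u + 1)
      + C (α * (a4 - a2)) * mon (r + 1) (s + 0) (t + 1) (u + 1)
      + C (-β * a2) * mon (r + 1) (s + 2) (t + 2) (u + 2)
      + C (β * (a2 - a4)) * mon (r + 1) (s + 1) (t + 2) (u + 2)
      + C (a3) * mon (r + 0) (s + 0) (t + 1) (u + 2)
      + C (a3 - β * a5) * mon (r + 0) (s + 1) (t + 1) (u + 1)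
      + C (-a3 - α * a4) * mon (r + 0) (s + 0) (t + 1) (u + 1)
      + C (α * (a5 - a4)) * mon (r + 1) (s + 0) (t + 0) (u + 1)
      + C (α * (a4 - a5)) * mon (r + 0) (s + 0) (t + 0) (u + 1)
      + C (-α * a5) * mon (r + 1) (s + 0) (t + 0) (u + 0)
      + C (α * a5) * mon (r + 0) (s + 0) (t + 0) (u + 0)
      + C (β * (a4 - a5)) * mon (r + 1) (s + 1) (t + 1) (u + 2) := by
  simp only [mon, map_sub, map_add, map_mul, map_neg]
  ring

theorem b_mem (b c r s t u : ℕ) (hR : Reg b c r s t u)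
    (a1 a2 a3 a4 a5 α β : K)
    (h1 : s = 2 * r → a1 = a4 ∧ a3 = a5) (h2 : s + u = b + 2 * t → a1 = a3 ∧ a4 = a5)
    (h3 : r + t = c + s → a2 = a4) :
    (C a1 * wP * yP * (zP - 1) + C a2 * wP * xP * (yP - 1) * yP * zP
      + C a3 * (wP - 1) * (yP - 1) + C a4 * wP * (xP - 1) * yP * (zP - 1)
      + C a5 * (wP - 1) * (xP - 1) * yP) * mon r s t u ∈ Sup (b + 1) c := by
  obtain ⟨g0, g1, g2, g3, g4, g5, g6, g7, g8⟩ :=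
    b_coef b c r s t u hR a1 a2 a3 a4 a5 α β h1 h2 h3
  rw [b_expand r s t u a1 a2 a3 a4 a5 α β]
  exact add_mem (add_mem (add_mem (add_mem (add_mem (add_mem (add_mem (add_mem (term_mem _ _ _ _ _ _ _ g0)
    (term_mem _ _ _ _ _ _ _ g1))
    (term_mem _ _ _ _ _ _ _ g2))
    (term_mem _ _ _ _ _ _ _ g3))
    (term_mem _ _ _ _ _ _ _ g4))
    (term_mem _ _ _ _ _ _ _ g5))
    (term_mem _ _ _ _ _ _ _ g6))
    (term_mem _ _ _ _ _ _ _ g7))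
    (term_mem _ _ _ _ _ _ _ g8)

theorem c_mem (b c r s t u : ℕ) (hR : Reg b c r s t u)
    (a1 a2 a3 a4 a5 α β : K)
    (h1 : s = 2 * r → a1 = β * a4 ∧ a3 = β * a5)
    (h2 : s + u = b + 2 * t → a1 = a3 ∧ a4 = a5) (h3 : r + t = c + s → a2 = a4) :
    (-(C a1 * wP ^ 2 * yP * (zP - 1) * zP)
      + C a2 * wP * xP * (yP - 1) * zP * (C α - C β * wP * yP * zP)
      + -(C a3 * (wP - 1) * wP * (yP - 1) * zP)
      + C a4 * wP * (xP - 1) * (zP - 1) * (C α - C β * wP * yP * zP)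
      + C a5 * (wP - 1) * (xP - 1) * (C α - C β * wP * yP * zP)) * mon r s t u ∈ Sup b (c + 1) := by
  obtain ⟨g0, g1, g2, g3, g4, g5, g6, g7, g8, g9, g10, g11, g12, g13⟩ :=
    c_coef b c r s t u hR a1 a2 a3 a4 a5 α β h1 h2 h3
  rw [c_expand r s t u a1 a2 a3 a4 a5 α β]
  exact add_mem (add_mem (add_mem (add_mem (add_mem (add_mem (add_mem (add_mem (add_mem (add_mem (add_mem (add_mem (add_mem (term_mem _ _ _ _ _ _ _ g0)
    (term_mem _ _ _ _ _ _ _ g1))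
    (term_mem _ _ _ _ _ _ _ g2))
    (term_mem _ _ _ _ _ _ _ g3))
    (term_mem _ _ _ _ _ _ _ g4))
    (term_mem _ _ _ _ _ _ _ g5))
    (term_mem _ _ _ _ _ _ _ g6))
    (term_mem _ _ _ _ _ _ _ g7))
    (term_mem _ _ _ _ _ _ _ g8))
    (term_mem _ _ _ _ _ _ _ g9))
    (term_mem _ _ _ _ _ _ _ g10))
    (term_mem _ _ _ _ _ _ _ g11))
    (term_mem _ _ _ _ _ _ _ g12))
    (term_mem _ _ _ _ _ _ _ g13)

theorem Qb0_mem (b : ℕ) : Qb0 b ∈ Sup b 0 := by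
  induction b with
  | zero =>
    exact Submodule.subset_span ⟨0, 0, 0, 0, by simp [Reg], by simp [mon, Qb0]⟩
  | succ b ih =>
    rw [Qb0]
    refine step_mem _ _ _ _ _ _ _ _ _ _ (monSet b 0) _ ?_ _ ih
    rintro p ⟨r, s, t, u, hR, rfl⟩
    simp only [scl_mon]
    have := b_mem b 0 r s t u hR
      (q ^ (4 * (b : ℤ)) * q ^ (0 * (r : ℤ) + 0 * s + (-4) * t + 0 * u))
      (q ^ (4 * (b : ℤ)) * q ^ (0 * (r : ℤ) + (-2) * s + 0 * t + 0 * u))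
      (q ^ (6 * (b : ℤ)) * q ^ (0 * (r : ℤ) + (-2) * s + 0 * t + (-2) * u))
      (q ^ (4 * (b : ℤ)) * q ^ ((-4) * (r : ℤ) + 2 * s + (-4) * t + 0 * u))
      (q ^ (6 * (b : ℤ)) * q ^ ((-4) * (r : ℤ) + 0 * s + 0 * t + (-2) * u)) 0 0
      (by intro h
          constructor <;>
          · simp only [← zpow_add₀ q_ne]
            congr 1
            lia)
      (by intro h
          constructor <;>
          · simp only [← zpow_add₀ q_ne]
            congr 1
            lia)
      (by intro h
          simp only [← zpow_add₀ q_ne]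
          congr 1
          lia)
    convert this using 1
    simp only [map_mul]
    ring

theorem Q_mem (b c : ℕ) : Q b c ∈ Sup b c := by
  induction c with
  | zero =>
    rw [Q]
    exact Qb0_mem b
  | succ c ih =>
    rw [Q, sub_eq_add_neg, ← neg_mul _ (scl 0 (-2) 0 (-2) (Q b c))]
    refine step_mem _ _ _ _ _ _ _ _ _ _ (monSet b c) _ ?_ _ ih
    rintro p ⟨r, s, t, u, hR, rfl⟩
    simp only [scl_mon]
    have := c_mem b c r s t u hR
      (q ^ (4 * (b : ℤ) + 8 * (c : ℤ)) * q ^ (0 * (r : ℤ) + 0 * s + (-4) * t + 0 * u))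
      (q ^ (4 * (b : ℤ) + 4 * (c : ℤ) - 2) * q ^ (0 * (r : ℤ) + (-2) * s + 0 * t + 0 * u))
      (q ^ (6 * (b : ℤ) + 8 * (c : ℤ)) * q ^ (0 * (r : ℤ) + (-2) * s + 0 * t + (-2) * u))
      (q ^ (4 * (b : ℤ) + 8 * (c : ℤ) - 2) * q ^ ((-4) * (r : ℤ) + 2 * s + (-4) * t + 0 * u))
      (q ^ (6 * (b : ℤ) + 8 * (c : ℤ) - 2) * q ^ ((-4) * (r : ℤ) + 0 * s + 0 * t + (-2) * u)) (q ^ (2 * (b : ℤ) + 4 * (c : ℤ) + 4)) (q ^ (2 : ℤ))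
      (by intro h
          constructor <;>
          · simp only [← zpow_add₀ q_ne]
            congr 1
            lia)
      (by intro h
          constructor <;>
          · simp only [← zpow_add₀ q_ne]
            congr 1
            lia)
      (by intro h
          simp only [← zpow_add₀ q_ne]
          congr 1
          lia)
    convert this using 1
    simp only [map_mul]
    ring

/-- if the coefficient of `x^r y^s z^t w^u` in `Q_{b,c}` is nonzero
then `u ≥ t`, `2r ≥ s`, `b − s + 2t − u ≥ 0` and `c − r + s − t ≥ 0`. -/
theorem Q_support (b c r s t u : ℕ)
    (h : MvPolynomial.coeff (Finsupp.equivFunOnFinite.symm ![r, s, t, u]) (Q b c) ≠ 0) :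
    t ≤ u ∧ s ≤ 2 * r ∧ s + u ≤ b + 2 * t ∧ r + t ≤ c + s := by
  have := coeff_of_mem b c _ (Q_mem b c) _ h
  simpa [Reg] using this
end
end
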